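/- Define h : (ℕ → Bool) → ℝ by h(x) = Σ_{i=0}^∞ 2·χ(x(i))/3^{i+1}, where χ(true) = 1 and χ(false) = 0. Let (x_k)_{k∈ℕ} be a sequence of elements of ℕ → Bool. Then the following are equivalent: (a) for every n there exists s such that for all k, k' ≥ s and all i ≤ n, x_k(i) = x_{k'}(i); (b) the sequence of real numbers (h(x_k))_{k∈ℕ} is a Cauchy sequence. -/

import Mathlib

/-- The Cantor middle-thirds embedding of Cantor space into `[0,1]`. -/
noncomputable def cantorMap (x : ℕ → Bool) : ℝ :=
  ∑' i : ℕ, 2 * (if x i then (1 : ℝ) else 0) / 3 ^ (i + 1)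

/-! `cantorMap x` is the number with ternary digits `2 * x i`. Numbers whose base-`b` digits agree
below `n` are `b⁻ⁿ`-close. Conversely, a gap of at least two between the first distinct digits, at
position `n`, contributes at least `2 * b⁻⁽ⁿ⁺¹⁾` to the difference of the two numbers, and the later
digits can cancel at most `b⁻⁽ⁿ⁺¹⁾` of it. -/

open Real

section SeparatedDigits

variable {b : ℕ}

theorem inv_pow_succ_le_ofDigits_sub_ofDigits {x y : ℕ → Fin b} {n : ℕ}
    (hxy : ∀ i < n, x i = y i) (hn : (x n : ℕ) + 2 ≤ y n) :
    ((b : ℝ) ^ (n + 1))⁻¹ ≤ ofDigits y - ofDigits x := by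
  set c : ℝ := ((b : ℝ) ^ (n + 1))⁻¹ with hc
  set tx := ofDigits fun i ↦ x (i + (n + 1))
  set ty := ofDigits fun i ↦ y (i + (n + 1))
  have hprefix : ∑ i ∈ Finset.range n, ofDigitsTerm x i = ∑ i ∈ Finset.range n, ofDigitsTerm y i :=
    Finset.sum_congr rfl fun i hi ↦ by simp only [ofDigitsTerm, hxy i (Finset.mem_range.mp hi)]
  have hdiff : ofDigits y - ofDigits x = c * (((y n : ℕ) - (x n : ℕ) : ℝ) + (ty - tx)) := by
    rw [ofDigits_eq_sum_add_ofDigits x (n + 1), ofDigits_eq_sum_add_ofDigits y (n + 1),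
      Finset.sum_range_succ, Finset.sum_range_succ, hprefix, ofDigitsTerm, ofDigitsTerm, ← hc]
    ring
  have hdigit : (2 : ℝ) ≤ (y n : ℕ) - (x n : ℕ) := by
    rw [le_sub_iff_add_le']
    exact_mod_cast hn
  have htail : -1 ≤ ty - tx := by
    linarith [ofDigits_nonneg fun i ↦ y (i + (n + 1)), ofDigits_le_one fun i ↦ x (i + (n + 1))]
  rw [hdiff]
  exact le_mul_of_one_le_right (by positivity) (by linarith)

theorem inv_pow_succ_le_abs_ofDigits_sub_ofDigits {x y : ℕ → Fin b} {n : ℕ}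
    (hxy : ∀ i < n, x i = y i) (hn : 2 ≤ |((x n : ℕ) : ℤ) - (y n : ℕ)|) :
    ((b : ℝ) ^ (n + 1))⁻¹ ≤ |ofDigits x - ofDigits y| := by
  rcases le_abs'.mp hn with hlt | hgt
  · rw [abs_sub_comm]
    exact (inv_pow_succ_le_ofDigits_sub_ofDigits hxy (by omega)).trans (le_abs_self _)
  · exact (inv_pow_succ_le_ofDigits_sub_ofDigits (fun i hi ↦ (hxy i hi).symm) (by omega)).trans
      (le_abs_self _)

variable {α : Type*} {d : α → Fin b}

theorem eq_of_abs_ofDigits_comp_sub_lt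
    (hd : Pairwise fun a a' ↦ 2 ≤ |((d a : ℕ) : ℤ) - (d a' : ℕ)|) {x y : ℕ → α} {n : ℕ}
    (h : |ofDigits (d ∘ x) - ofDigits (d ∘ y)| < ((b : ℝ) ^ n)⁻¹) :
    ∀ i < n, x i = y i := by
  rcases eq_or_ne x y with rfl | hne
  · exact fun _ _ ↦ rfl
  set m := PiNat.firstDiff x y
  have hprefix : ∀ i < m, x i = y i := fun _ hi ↦ PiNat.apply_eq_of_lt_firstDiff hi
  suffices hnm : n ≤ m from fun i hi ↦ hprefix i (hi.trans_le hnm)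
  by_contra! hmn
  have hb : (1 : ℝ) ≤ b := by exact_mod_cast (d (x 0)).pos
  refine h.not_ge ?_
  calc ((b : ℝ) ^ n)⁻¹
      ≤ ((b : ℝ) ^ (m + 1))⁻¹ := by gcongr; exact hmn
    _ ≤ |ofDigits (d ∘ x) - ofDigits (d ∘ y)| :=
        inv_pow_succ_le_abs_ofDigits_sub_ofDigits (fun i hi ↦ congrArg d (hprefix i hi))
          (hd (PiNat.apply_firstDiff_ne hne))

theorem cantorMap_cauchySeq_iff_general {β : Type*} [Nonempty β] [SemilatticeSup β] (hb : 1 < b)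
    (hd : Pairwise fun a a' ↦ 2 ≤ |((d a : ℕ) : ℤ) - (d a' : ℕ)|) (x : β → ℕ → α) :
    (∀ n : ℕ, ∃ s : β, ∀ k ≥ s, ∀ k' ≥ s, ∀ i ≤ n, x k i = x k' i) ↔
      CauchySeq fun k ↦ ofDigits (d ∘ x k) := by
  have hb' : (1 : ℝ) < b := by exact_mod_cast hb
  simp only [Metric.cauchySeq_iff, Real.dist_eq]
  constructor
  · intro hstable ε hε
    obtain ⟨n, hn⟩ := exists_pow_lt_of_lt_one hε (inv_lt_one_of_one_lt₀ hb')
    obtain ⟨s, hs⟩ := hstable n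
    refine ⟨s, fun k hk k' hk' ↦ ?_⟩
    rw [inv_pow] at hn
    exact (abs_ofDigits_sub_ofDigits_le fun i hi ↦
      congrArg d (hs k hk k' hk' i hi.le)).trans_lt hn
  · intro hcauchy n
    obtain ⟨s, hs⟩ := hcauchy ((b : ℝ) ^ (n + 1))⁻¹ (by positivity)
    exact ⟨s, fun k hk k' hk' i hi ↦
      eq_of_abs_ofDigits_comp_sub_lt hd (hs k hk k' hk') i (Nat.lt_succ_of_le hi)⟩

end SeparatedDigits

/-- The ternary digit, `0` or `2`, by which the middle-thirds embedding encodes a bit. -/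
def cantorDigit (a : Bool) : Fin 3 := if a then 2 else 0

theorem cantorDigit_separated :
    Pairwise fun a a' ↦ 2 ≤ |((cantorDigit a : ℕ) : ℤ) - (cantorDigit a' : ℕ)| := by
  unfold Pairwise
  decide

theorem cantorMap_eq_ofDigits (x : ℕ → Bool) : cantorMap x = ofDigits (cantorDigit ∘ x) := by
  refine tsum_congr fun i ↦ ?_
  cases hx : x i <;> simp [ofDigitsTerm, cantorDigit, hx, div_eq_mul_inv]

/-- A sequence `(x_k)` in Cantor space is Cauchy (in the sense that for every `n`
the coordinates `i ≤ n` eventually stabilize along the sequence) if and only if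
the image sequence `(h(x_k))` under the middle-thirds map is a Cauchy sequence
of real numbers. -/
theorem cantorMap_cauchySeq_iff (x : ℕ → ℕ → Bool) :
    (∀ n : ℕ, ∃ s : ℕ, ∀ k ≥ s, ∀ k' ≥ s, ∀ i ≤ n, x k i = x k' i) ↔
      CauchySeq (fun k => cantorMap (x k)) := by
  simp only [cantorMap_eq_ofDigits]
  exact cantorMap_cauchySeq_iff_general (by norm_num) cantorDigit_separated x
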